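/- Suppose Γ⃗ = (Γ(x,M))_{x∈E,M>0} is a (C_w, δ_max)-convex shape field. Let 0 < δ ≤ δ_max, x ∈ E, M > 0, A', A'' > 0, k ≥ 1, and P₁,...,P_k, Q₁,...,Q_k ∈ P. Assume: P_i ∈ Γ(x, A'M) for all i; |∂^β(P_i−P_j)(x)| ≤ A'M δ^{m−|β|} for |β| ≤ m−1 and all i, j; |∂^β Q_i(x)| ≤ A'' δ^{−|β|} for |β| ≤ m−1 and all i; and Σ_{i=1}^k Q_i⊙ₓQ_i = 1. Then Σ_{i=1}^k Q_i⊙ₓQ_i⊙ₓP_i ∈ Γ(x, CM), with C determined by A', A'', C_w, m, n, k. -/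

import Mathlib

/-!
The case `k = 2` follows from the definition of `(C_w, δ_max)`-convexity applied at the smaller
scale `δ / L` and at a larger multiple of `M` (`two_case`): since `Q₁(x)² + Q₂(x)² = 1`, the bound
`|Q_i(x)| ≤ 1` has no constant, and for derivatives of positive order, as for the differences
`P₁ - P₂`, the constants are absorbed by powers of `L`.

The general case (`k_case`) is an induction on `k`. One of the indices, say `j`, has
`Q_j(x)² ≤ 1/2`, so the jet of `S = ∑_{i ≠ j} Q_i²` has constant term at least `1/2` and possesses
an inverse square root `R` in the ring of jets, i.e. `R² S = 1` (`exists_root`). The inductive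
hypothesis applied to the weights `Q_i R` puts `V = ∑_{i ≠ j} (Q_i R)² P_i` into `Γ(x, C₁ M)`, and
the case of two polynomials applied to `P_j, V` with weights `Q_j, S R` gives the claim, because
`(S R)² = S` and `S V = ∑_{i ≠ j} Q_i² P_i` as jets.

All identities are taken in the quotient `jq` of the polynomial ring by the ideal of polynomials
vanishing to order `m` at `x`. All estimates are expressed by the seminorm
`jn = ∑_{|a| < m} |a-th Taylor coefficient at x| δ^{|a|}`, which is submultiplicative
(`jn_mul_le`) and equivalent to the scaled derivative bounds (`pdEval_le`, `jn_le`), with constants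
depending only on `m` and `n`. The jet `R` is `S(x)^{-1/2} p(T)`, where `T = S / S(x) - 1` is
nilpotent and `p` is a truncated series of `(1 + t)^{-1/2}`; hence its seminorm is controlled by
that of `S`.
-/

noncomputable section

/-- Iterated partial derivative `∂^β` of a multivariate polynomial. -/
def pdiff {n : ℕ} (β : Fin n → ℕ) (P : MvPolynomial (Fin n) ℝ) :
    MvPolynomial (Fin n) ℝ :=
  (List.finRange n).foldr (fun i Q => (fun R => MvPolynomial.pderiv i R)^[β i] Q) P

/-- `∂^β P (x)`. -/
def pdEval {n : ℕ} (β : Fin n → ℕ) (P : MvPolynomial (Fin n) ℝ) (x : Fin n → ℝ) : ℝ :=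
  MvPolynomial.eval x (pdiff β P)

/-- The multiindices of order `≤ m - 1` as a `Finset`. -/
def multiIdx (m n : ℕ) : Finset (Fin n → ℕ) :=
  (Fintype.piFinset fun _ : Fin n => Finset.range m).filter fun α => (∑ i, α i) ≤ m - 1

/-- The `(m-1)`-st degree Taylor polynomial (jet) of `R` at `x`. -/
def jetAt (m : ℕ) {n : ℕ} (x : Fin n → ℝ) (R : MvPolynomial (Fin n) ℝ) :
    MvPolynomial (Fin n) ℝ :=
  ∑ α ∈ multiIdx m n,
    MvPolynomial.C (pdEval α R x / ((∏ i, Nat.factorial (α i) : ℕ) : ℝ)) *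
      ∏ i, (MvPolynomial.X i - MvPolynomial.C (x i)) ^ α i

/-- Multiplication of jets at `x`: `P ⊙ₓ Q = J_x (P Q)`. -/
def odot (m : ℕ) {n : ℕ} (x : Fin n → ℝ) (P Q : MvPolynomial (Fin n) ℝ) :
    MvPolynomial (Fin n) ℝ :=
  jetAt m x (P * Q)

/-- `Γ` is a shape field on `E`: each `Γ(x,M)` is a convex set of polynomials of
degree `≤ m-1`, monotone in `M`. -/
def ShapeField (m n : ℕ) (E : Set (Fin n → ℝ))
    (Γ : (Fin n → ℝ) → ℝ → Set (MvPolynomial (Fin n) ℝ)) : Prop :=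
  ∀ x ∈ E, ∀ M : ℝ, 0 < M → Convex ℝ (Γ x M) ∧ (∀ P ∈ Γ x M, P.totalDegree ≤ m - 1) ∧
    ∀ M' : ℝ, 0 < M' → M' ≤ M → Γ x M' ⊆ Γ x M

/-- `(C_w, δ_max)`-convexity of a shape field. -/
def WConvex (m n : ℕ) (E : Set (Fin n → ℝ))
    (Γ : (Fin n → ℝ) → ℝ → Set (MvPolynomial (Fin n) ℝ)) (Cw δmax : ℝ) : Prop :=
  ∀ δ : ℝ, 0 < δ → δ ≤ δmax → ∀ x ∈ E, ∀ M : ℝ, 0 < M →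
    ∀ P₁ P₂ Q₁ Q₂ : MvPolynomial (Fin n) ℝ,
      P₁ ∈ Γ x M → P₂ ∈ Γ x M →
      (∀ β : Fin n → ℕ, (∑ i, β i) ≤ m - 1 →
        |pdEval β (P₁ - P₂) x| ≤ M * δ ^ (m - ∑ i, β i)) →
      (∀ β : Fin n → ℕ, (∑ i, β i) ≤ m - 1 →
        |pdEval β Q₁ x| ≤ δ ^ (-(∑ i, (β i : ℤ))) ∧
        |pdEval β Q₂ x| ≤ δ ^ (-(∑ i, (β i : ℤ)))) →
      odot m x Q₁ Q₁ + odot m x Q₂ Q₂ = 1 →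
      odot m x (odot m x Q₁ Q₁) P₁ + odot m x (odot m x Q₂ Q₂) P₂ ∈ Γ x (Cw * M)

/-! ### Taylor coefficients and jets -/

open MvPolynomial in
/-- The algebra endomorphism `F ↦ F(· + x)`: the coefficients of `tay x F` are the Taylor
coefficients of `F` at `x`. -/
def tay {n : ℕ} (x : Fin n → ℝ) : MvPolynomial (Fin n) ℝ →ₐ[ℝ] MvPolynomial (Fin n) ℝ :=
  MvPolynomial.aeval fun i => X i + C (x i)

/-- The Taylor coefficient of `F` at `x` with multiindex `a`. -/
def tcoef {n : ℕ} (x : Fin n → ℝ) (a : Fin n →₀ ℕ) (F : MvPolynomial (Fin n) ℝ) : ℝ :=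
  MvPolynomial.coeff a (tay x F)

theorem tay_injective {n : ℕ} (x : Fin n → ℝ) : Function.Injective (tay x) := by
  have h : ∀ F, tay (-x) (tay x F) = F := by
    intro F
    have : (tay (-x)).comp (tay x) = AlgHom.id ℝ _ := by
      ext i : 1
      simp [tay]
    exact DFunLike.congr_fun this F
  exact Function.LeftInverse.injective h

theorem pderiv_tay {n : ℕ} (x : Fin n → ℝ) (i : Fin n) (F : MvPolynomial (Fin n) ℝ) :
    MvPolynomial.pderiv i (tay x F) = tay x (MvPolynomial.pderiv i F) := by
  induction F using MvPolynomial.induction_on with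
  | C a => simp [tay]
  | add p q hp hq => simp [hp, hq]
  | mul_X p j hp =>
    rw [map_mul, MvPolynomial.pderiv_mul, hp, MvPolynomial.pderiv_mul, map_add, map_mul, map_mul]
    congr 2
    by_cases h : j = i
    · subst h; simp [tay]
    · simp [tay, MvPolynomial.pderiv_X_of_ne h]

theorem iterate_pderiv_tay {n : ℕ} (x : Fin n → ℝ) (i : Fin n) (k : ℕ)
    (F : MvPolynomial (Fin n) ℝ) :
    (fun R => MvPolynomial.pderiv i R)^[k] (tay x F)
      = tay x ((fun R => MvPolynomial.pderiv i R)^[k] F) := by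
  induction k generalizing F with
  | zero => rfl
  | succ k ih => rw [Function.iterate_succ_apply, pderiv_tay, ih, Function.iterate_succ_apply]

theorem eval_eq_tay {n : ℕ} (x : Fin n → ℝ) (F : MvPolynomial (Fin n) ℝ) :
    MvPolynomial.eval x F = MvPolynomial.coeff 0 (tay x F) := by
  induction F using MvPolynomial.induction_on with
  | C a => simp [tay]
  | add p q hp hq => simp [hp, hq]
  | mul_X p j hp =>
    rw [← MvPolynomial.constantCoeff_eq] at *
    simp [hp, tay]

/-- The coefficients of `∂_i^k F` are descending factorials times shifted coefficients of `F`. -/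
theorem coeff_iterate_pderiv {n : ℕ} (i : Fin n) (k : ℕ) (a : Fin n →₀ ℕ)
    (F : MvPolynomial (Fin n) ℝ) :
    MvPolynomial.coeff a ((fun R => MvPolynomial.pderiv i R)^[k] F)
      = ((a i + k).descFactorial k : ℝ) * MvPolynomial.coeff (a + Finsupp.single i k) F := by
  induction k generalizing a with
  | zero => simp
  | succ k ih =>
    rw [Function.iterate_succ_apply', MvPolynomial.coeff_pderiv, ih]
    rw [add_assoc, ← Finsupp.single_add, add_comm 1 k]
    simp only [Finsupp.add_apply, Finsupp.single_eq_same]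
    rw [show a i + (k + 1) = (a i + 1 + k) by ring, Nat.descFactorial_succ]
    have : a i + 1 + k - k = a i + 1 := by omega
    rw [this]; push_cast; ring

/-- Coefficients of `∂^β F`, where the derivatives run over a duplicate-free list of variables and
the coefficient has exponent zero in each of these variables. -/
theorem coeff_foldr_pderiv {n : ℕ} (β : Fin n → ℕ) (l : List (Fin n)) (hl : l.Nodup)
    (a : Fin n →₀ ℕ) (ha : ∀ i ∈ l, a i = 0) (F : MvPolynomial (Fin n) ℝ) :
    MvPolynomial.coeff a
        (l.foldr (fun i Q => (fun R => MvPolynomial.pderiv i R)^[β i] Q) F)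
      = (l.map fun i => ((β i).factorial : ℝ)).prod
        * MvPolynomial.coeff (a + (l.map fun i => Finsupp.single i (β i)).sum) F := by
  induction l generalizing a with
  | nil => simp
  | cons i l ih =>
    rw [List.nodup_cons] at hl
    rw [List.foldr_cons, coeff_iterate_pderiv, ih hl.2]
    · simp [ha i (by simp), Nat.descFactorial_self, add_assoc, mul_assoc]
    · intro j hj
      have : i ≠ j := by rintro rfl; exact hl.1 hj
      simp [ha j (by simp [hj]), this.symm]

theorem tay_pdiff {n : ℕ} (x : Fin n → ℝ) (β : Fin n → ℕ) (l : List (Fin n))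
    (F : MvPolynomial (Fin n) ℝ) :
    l.foldr (fun i Q => (fun R => MvPolynomial.pderiv i R)^[β i] Q) (tay x F)
      = tay x (l.foldr (fun i Q => (fun R => MvPolynomial.pderiv i R)^[β i] Q) F) := by
  induction l with
  | nil => rfl
  | cons i l ih => rw [List.foldr_cons, ih, iterate_pderiv_tay, List.foldr_cons]

/-- `∂^a F (x) = a! · (Taylor coefficient)`. -/
theorem pdEval_eq {n : ℕ} (a : Fin n →₀ ℕ) (F : MvPolynomial (Fin n) ℝ) (x : Fin n → ℝ) :
    pdEval a F x = ((∏ i, (a i).factorial : ℕ) : ℝ) * tcoef x a F := by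
  rw [pdEval, eval_eq_tay, pdiff, ← tay_pdiff,
    coeff_foldr_pderiv _ _ (List.nodup_finRange n) _ (by simp), tcoef]
  have h1 : (List.map (fun i => Finsupp.single i (a i)) (List.finRange n)).sum = a := by
    rw [← List.ofFn_eq_map, List.sum_ofFn, Finsupp.univ_sum_single]
  rw [h1, zero_add, ← List.ofFn_eq_map, List.prod_ofFn]
  push_cast; rfl

/-- The multiindices of degree `< m`, as finitely supported functions. -/
def idx (m n : ℕ) : Finset (Fin n →₀ ℕ) :=
  (multiIdx m n).map Finsupp.equivFunOnFinite.symm.toEmbedding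

theorem mem_multiIdx {m n : ℕ} (hm : 0 < m) (α : Fin n → ℕ) :
    α ∈ multiIdx m n ↔ ∑ i, α i ≤ m - 1 := by
  simp only [multiIdx, Finset.mem_filter, Fintype.mem_piFinset, Finset.mem_range,
    and_iff_right_iff_imp]
  intro h i
  have := Finset.single_le_sum (f := α) (fun _ _ => Nat.zero_le _) (Finset.mem_univ i)
  omega

theorem mem_idx {m n : ℕ} (hm : 0 < m) (a : Fin n →₀ ℕ) :
    a ∈ idx m n ↔ a.degree < m := by
  have : a = Finsupp.equivFunOnFinite.symm (a : Fin n → ℕ) := by ext; simp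
  rw [idx, this, Finset.mem_map_equiv, Equiv.symm_symm, Equiv.apply_symm_apply, mem_multiIdx hm,
    ← this, Finsupp.degree_eq_sum]
  omega

theorem tcoef_jetAt {m n : ℕ} (hm : 0 < m) (x : Fin n → ℝ) (F : MvPolynomial (Fin n) ℝ)
    (b : Fin n →₀ ℕ) :
    tcoef x b (jetAt m x F) = if b.degree < m then tcoef x b F else 0 := by
  classical
  -- Translated to the origin, the jet is the truncation of `tay x F` to degrees `< m`.
  have h : tay x (jetAt m x F) = ∑ a ∈ idx m n, MvPolynomial.monomial a (tcoef x a F) := by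
    rw [jetAt, map_sum, idx, Finset.sum_map]
    refine Finset.sum_congr rfl fun α _ => ?_
    have h1 := pdEval_eq (Finsupp.equivFunOnFinite.symm α) F x
    simp only [Finsupp.coe_equivFunOnFinite_symm] at h1
    have h2 : ((∏ i, (α i).factorial : ℕ) : ℝ) ≠ 0 := by
      exact_mod_cast Finset.prod_ne_zero_iff.2 fun i _ => Nat.factorial_ne_zero _
    rw [h1, mul_div_cancel_left₀ _ h2, MvPolynomial.monomial_eq, Finsupp.prod_fintype _ _ (by simp)]
    simp [tay]
  rw [tcoef, h, MvPolynomial.coeff_sum]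
  simp only [MvPolynomial.coeff_monomial, Finset.sum_ite_eq', mem_idx hm]

theorem totalDegree_tay_le {n : ℕ} (x : Fin n → ℝ) (F : MvPolynomial (Fin n) ℝ) :
    (tay x F).totalDegree ≤ F.totalDegree := by
  rw [tay, MvPolynomial.aeval_def, MvPolynomial.eval₂_eq']
  refine MvPolynomial.totalDegree_finsetSum_le fun d hd => ?_
  refine (MvPolynomial.totalDegree_mul _ _).trans ?_
  rw [MvPolynomial.algebraMap_eq, MvPolynomial.totalDegree_C, zero_add]
  refine (MvPolynomial.totalDegree_finsetProd _ _).trans ?_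
  refine le_trans ?_ (MvPolynomial.le_totalDegree hd)
  rw [Finsupp.sum_fintype _ _ (by simp)]
  refine Finset.sum_le_sum fun i _ => ?_
  refine (MvPolynomial.totalDegree_pow _ _).trans ?_
  have h1 : (MvPolynomial.X i + MvPolynomial.C (x i) : MvPolynomial (Fin n) ℝ).totalDegree ≤ 1 :=
    (MvPolynomial.totalDegree_add _ _).trans (by simp)
  exact (Nat.mul_le_mul_left _ h1).trans (by simp)

theorem jetAt_eq_self {m n : ℕ} (hm : 0 < m) (x : Fin n → ℝ) (F : MvPolynomial (Fin n) ℝ)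
    (hF : F.totalDegree ≤ m - 1) : jetAt m x F = F := by
  apply tay_injective x
  ext b
  have := tcoef_jetAt hm x F b
  rw [tcoef, tcoef] at this
  rw [this]
  split_ifs with h
  · rfl
  · symm
    apply MvPolynomial.coeff_eq_zero_of_totalDegree_lt
    have h1 := totalDegree_tay_le x F
    rw [Finsupp.degree_apply] at h
    omega

/-- The ideal of polynomials vanishing to order `m` at `x`. -/
def jideal (m : ℕ) {n : ℕ} (x : Fin n → ℝ) : Ideal (MvPolynomial (Fin n) ℝ) :=
  (MvPolynomial.idealOfVars (Fin n) ℝ ^ m).comap (tay x)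

theorem mem_jideal {m n : ℕ} {x : Fin n → ℝ} {F : MvPolynomial (Fin n) ℝ} :
    F ∈ jideal m x ↔ ∀ a : Fin n →₀ ℕ, a.degree < m → tcoef x a F = 0 := by
  rw [jideal, Ideal.mem_comap, MvPolynomial.mem_pow_idealOfVars_iff']
  rfl

/-- The quotient map onto the ring of `(m-1)`-jets at `x`. -/
abbrev jq (m : ℕ) {n : ℕ} (x : Fin n → ℝ) :
    MvPolynomial (Fin n) ℝ →+* MvPolynomial (Fin n) ℝ ⧸ jideal m x :=
  Ideal.Quotient.mk (jideal m x)

theorem tcoef_sub {n : ℕ} (x : Fin n → ℝ) (a : Fin n →₀ ℕ) (F G : MvPolynomial (Fin n) ℝ) :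
    tcoef x a (F - G) = tcoef x a F - tcoef x a G := by simp [tcoef]

theorem jq_eq_iff {m n : ℕ} {x : Fin n → ℝ} {F G : MvPolynomial (Fin n) ℝ} :
    jq m x F = jq m x G ↔ ∀ a : Fin n →₀ ℕ, a.degree < m → tcoef x a F = tcoef x a G := by
  rw [Ideal.Quotient.eq, mem_jideal]
  simp only [tcoef_sub, sub_eq_zero]

theorem jq_jetAt {m n : ℕ} (hm : 0 < m) (x : Fin n → ℝ) (F : MvPolynomial (Fin n) ℝ) :
    jq m x (jetAt m x F) = jq m x F := by
  rw [jq_eq_iff]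
  intro a ha
  rw [tcoef_jetAt hm, if_pos ha]

theorem jetAt_congr {m n : ℕ} (hm : 0 < m) {x : Fin n → ℝ} {F G : MvPolynomial (Fin n) ℝ}
    (h : jq m x F = jq m x G) : jetAt m x F = jetAt m x G := by
  apply tay_injective x
  ext b
  change tcoef x b _ = tcoef x b _
  rw [tcoef_jetAt hm, tcoef_jetAt hm]
  split_ifs with hb
  · exact jq_eq_iff.1 h b hb
  · rfl

theorem jetAt_add {m n : ℕ} (hm : 0 < m) (x : Fin n → ℝ) (F G : MvPolynomial (Fin n) ℝ) :
    jetAt m x (F + G) = jetAt m x F + jetAt m x G := by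
  apply tay_injective x
  ext b
  have h1 := tcoef_jetAt hm x F b
  have h2 := tcoef_jetAt hm x G b
  have h3 := tcoef_jetAt hm x (F + G) b
  simp only [tcoef, map_add, MvPolynomial.coeff_add] at *
  rw [h1, h2, h3]
  split_ifs <;> simp

theorem jetAt_zero {m n : ℕ} (hm : 0 < m) (x : Fin n → ℝ) : jetAt m x 0 = 0 :=
  jetAt_eq_self hm x 0 (by simp)

theorem jetAt_sum {m n : ℕ} (hm : 0 < m) (x : Fin n → ℝ) {ι : Type*} (s : Finset ι)
    (F : ι → MvPolynomial (Fin n) ℝ) :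
    jetAt m x (∑ i ∈ s, F i) = ∑ i ∈ s, jetAt m x (F i) :=
  map_sum (AddMonoidHom.mk' (jetAt m x) (jetAt_add hm x)) F s

theorem odot_odot {m n : ℕ} (hm : 0 < m) (x : Fin n → ℝ) (Q P : MvPolynomial (Fin n) ℝ) :
    odot m x (odot m x Q Q) P = jetAt m x (Q ^ 2 * P) := by
  apply jetAt_congr hm
  rw [odot, map_mul, jq_jetAt hm, ← map_mul, sq]

/-! ### The scaled seminorm on jets -/

/-- The scaled `ℓ¹` seminorm of the `(m-1)`-jet of `F` at `x`. -/
def jn (m : ℕ) {n : ℕ} (x : Fin n → ℝ) (δ : ℝ) (F : MvPolynomial (Fin n) ℝ) : ℝ :=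
  ∑ a ∈ idx m n, |tcoef x a F| * δ ^ a.degree

section
variable {m n : ℕ} {x : Fin n → ℝ} {δ : ℝ}

theorem jn_nonneg (hδ : 0 < δ) (F : MvPolynomial (Fin n) ℝ) : 0 ≤ jn m x δ F :=
  Finset.sum_nonneg fun _ _ => by positivity

theorem jn_congr (hm : 0 < m) {F G : MvPolynomial (Fin n) ℝ} (h : jq m x F = jq m x G) :
    jn m x δ F = jn m x δ G := by
  refine Finset.sum_congr rfl fun a ha => ?_
  rw [jq_eq_iff.1 h a ((mem_idx hm a).1 ha)]

theorem jn_add_le (hδ : 0 < δ) (F G : MvPolynomial (Fin n) ℝ) :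
    jn m x δ (F + G) ≤ jn m x δ F + jn m x δ G := by
  rw [jn, jn, jn, ← Finset.sum_add_distrib]
  refine Finset.sum_le_sum fun a _ => ?_
  rw [← add_mul]
  refine mul_le_mul_of_nonneg_right ?_ (by positivity)
  simp only [tcoef, map_add, MvPolynomial.coeff_add]
  exact abs_add_le _ _

theorem jn_zero : jn m x δ 0 = 0 := by simp [jn, tcoef]

theorem jn_neg (F : MvPolynomial (Fin n) ℝ) : jn m x δ (-F) = jn m x δ F := by
  simp [jn, tcoef]

theorem jn_sum_le (hδ : 0 < δ) {ι : Type*} (s : Finset ι) (F : ι → MvPolynomial (Fin n) ℝ) :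
    jn m x δ (∑ i ∈ s, F i) ≤ ∑ i ∈ s, jn m x δ (F i) :=
  Finset.le_sum_of_subadditive (jn m x δ) jn_zero.le (jn_add_le hδ) s F

theorem jn_C (hm : 0 < m) (c : ℝ) : jn m x δ (MvPolynomial.C c) = |c| := by
  classical
  rw [jn, Finset.sum_eq_single 0]
  · simp [tcoef, tay]
  · intro a _ ha
    simp [tcoef, tay, MvPolynomial.coeff_C, ha.symm]
  · intro h
    exact absurd ((mem_idx hm 0).2 (by simpa using hm)) h

/-- The scaled seminorm is submultiplicative, because convolution is so for `ℓ¹` norms. -/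
theorem jn_mul_le (hm : 0 < m) (hδ : 0 < δ) (F G : MvPolynomial (Fin n) ℝ) :
    jn m x δ (F * G) ≤ jn m x δ F * jn m x δ G := by
  classical
  set h : (Fin n →₀ ℕ) × (Fin n →₀ ℕ) → ℝ := fun p =>
    (|tcoef x p.1 F| * δ ^ p.1.degree) * (|tcoef x p.2 G| * δ ^ p.2.degree) with hh
  have h0 : ∀ p, 0 ≤ h p := fun p => by positivity
  -- The pairs of multiindices that contribute to the truncated product.
  set T := ((idx m n) ×ˢ (idx m n)).filter fun p => p.1 + p.2 ∈ idx m n with hT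
  have hR : jn m x δ F * jn m x δ G = ∑ p ∈ (idx m n) ×ˢ (idx m n), h p := by
    rw [jn, jn, Finset.sum_mul_sum, Finset.sum_product]
  have hTle : ∑ p ∈ T, h p ≤ ∑ p ∈ (idx m n) ×ˢ (idx m n), h p :=
    Finset.sum_le_sum_of_subset_of_nonneg (Finset.filter_subset _ _) fun p _ _ => h0 p
  rw [hR]
  refine le_trans ?_ hTle
  rw [← Finset.sum_fiberwise_of_maps_to (s := T) (t := idx m n) (g := fun p => p.1 + p.2)
    (fun p hp => (Finset.mem_filter.1 hp).2)]
  refine Finset.sum_le_sum fun c hc => ?_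
  have h1 : |tcoef x c (F * G)| ≤
      ∑ p ∈ Finset.HasAntidiagonal.antidiagonal c, |tcoef x p.1 F| * |tcoef x p.2 G| := by
    rw [tcoef, map_mul, MvPolynomial.coeff_mul]
    refine (Finset.abs_sum_le_sum_abs _ _).trans (le_of_eq ?_)
    exact Finset.sum_congr rfl fun p _ => abs_mul _ _
  refine (mul_le_mul_of_nonneg_right h1 (by positivity)).trans ?_
  rw [Finset.sum_mul]
  have h2 : ∑ p ∈ Finset.HasAntidiagonal.antidiagonal c, |tcoef x p.1 F| * |tcoef x p.2 G| * δ ^ c.degree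
      = ∑ p ∈ Finset.HasAntidiagonal.antidiagonal c, h p := by
    refine Finset.sum_congr rfl fun p hp => ?_
    rw [Finset.HasAntidiagonal.mem_antidiagonal] at hp
    rw [← hp, map_add, pow_add, hh]
    ring
  rw [h2]
  refine Finset.sum_le_sum_of_subset_of_nonneg ?_ fun p _ _ => h0 p
  intro p hp
  rw [Finset.HasAntidiagonal.mem_antidiagonal] at hp
  rw [mem_idx hm] at hc
  have hd : p.1.degree + p.2.degree = c.degree := by rw [← map_add, hp]
  simp only [hT, Finset.mem_filter, Finset.mem_product, mem_idx hm, hp, and_true]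
  omega

theorem jn_mul_le' (hm : 0 < m) (hδ : 0 < δ) {F G : MvPolynomial (Fin n) ℝ} {A B : ℝ}
    (hF : jn m x δ F ≤ A) (hG : jn m x δ G ≤ B) : jn m x δ (F * G) ≤ A * B :=
  (jn_mul_le hm hδ F G).trans
    (mul_le_mul hF hG (jn_nonneg hδ G) ((jn_nonneg hδ F).trans hF))

theorem jn_pow_le (hm : 0 < m) (hδ : 0 < δ) {F : MvPolynomial (Fin n) ℝ} {A : ℝ}
    (hF : jn m x δ F ≤ A) (k : ℕ) : jn m x δ (F ^ k) ≤ A ^ k := by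
  induction k with
  | zero => simpa using (jn_C (δ := δ) (x := x) hm 1).le
  | succ k ih => rw [pow_succ, pow_succ]; exact jn_mul_le' hm hδ ih hF

theorem tcoef_le_jn (hm : 0 < m) (hδ : 0 < δ) (F : MvPolynomial (Fin n) ℝ) (a : Fin n →₀ ℕ)
    (ha : a.degree < m) : |tcoef x a F| * δ ^ a.degree ≤ jn m x δ F :=
  Finset.single_le_sum (f := fun a => |tcoef x a F| * δ ^ a.degree)
    (fun _ _ => by positivity) ((mem_idx hm a).2 ha)

theorem prod_factorial_le (a : Fin n →₀ ℕ) (ha : a.degree < m) :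
    ((∏ i, (a i).factorial : ℕ) : ℝ) ≤ (m.factorial : ℝ) := by
  have h := Nat.le_of_dvd (Nat.factorial_pos _)
    (Nat.prod_factorial_dvd_factorial_sum Finset.univ (a : Fin n → ℕ))
  rw [← Finsupp.degree_eq_sum] at h
  exact_mod_cast h.trans (Nat.factorial_le ha.le)

/-- Seminorm bounds give bounds for derivatives. -/
theorem pdEval_le (hm : 0 < m) (hδ : 0 < δ) (F : MvPolynomial (Fin n) ℝ) (β : Fin n → ℕ)
    (hβ : ∑ i, β i ≤ m - 1) {A : ℝ} (hF : jn m x δ F ≤ A) :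
    |pdEval β F x| * δ ^ (∑ i, β i) ≤ m.factorial * A := by
  set a : Fin n →₀ ℕ := Finsupp.equivFunOnFinite.symm β with ha
  have hd : a.degree = ∑ i, β i := by rw [Finsupp.degree_eq_sum]; simp [ha]
  have hlt : a.degree < m := by omega
  have h1 := pdEval_eq a F x
  rw [show (a : Fin n → ℕ) = β from rfl] at h1
  rw [h1, abs_mul, abs_of_nonneg (by positivity), mul_assoc, ← hd]
  exact mul_le_mul (prod_factorial_le a hlt) ((tcoef_le_jn hm hδ F a hlt).trans hF)
    (by positivity) (by positivity)

/-- Bounds for derivatives give seminorm bounds. -/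
theorem jn_le (hm : 0 < m) (hδ : 0 < δ) (F : MvPolynomial (Fin n) ℝ) {A : ℝ}
    (h : ∀ β : Fin n → ℕ, ∑ i, β i ≤ m - 1 → |pdEval β F x| * δ ^ (∑ i, β i) ≤ A) :
    jn m x δ F ≤ (idx m n).card * A := by
  rw [← nsmul_eq_mul]
  refine Finset.sum_le_card_nsmul _ _ _ fun a ha => ?_
  rw [mem_idx hm, Finsupp.degree_eq_sum] at ha
  refine le_trans ?_ (h a (by omega))
  rw [Finsupp.degree_eq_sum, pdEval_eq, abs_mul]
  refine mul_le_mul_of_nonneg_right ?_ (by positivity)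
  refine le_mul_of_one_le_left (abs_nonneg _) ?_
  rw [abs_of_nonneg (by positivity)]
  exact_mod_cast Nat.one_le_iff_ne_zero.2
    (Finset.prod_ne_zero_iff.2 fun i _ => Nat.factorial_ne_zero _)

end

/-! ### Inverse square roots of jets -/

/-- Truncated power series of `(1+t)^{-1/2}`, obtained by Newton's iteration. -/
theorem exists_invSqrt (m : ℕ) :
    ∃ p q : Polynomial ℝ, p ^ 2 * (1 + Polynomial.X) = 1 + Polynomial.X ^ (m + 1) * q := by
  induction m with
  | zero => exact ⟨1, 1, by ring⟩
  | succ m ih =>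
    obtain ⟨p, q, h⟩ := ih
    -- One Newton step `p ↦ p (1 - r / 2)`, where `r` is the current error.
    set Y : Polynomial ℝ := Polynomial.X ^ m with hY
    have h2 : (Polynomial.C (1 / 2 : ℝ)) * 2 = 1 := by
      rw [← map_ofNat Polynomial.C, ← map_mul]; norm_num
    set c := Polynomial.C (1 / 2 : ℝ)
    set X := (Polynomial.X : Polynomial ℝ)
    refine ⟨p * (1 - c * (X ^ (m + 1) * q)),
      Y * q ^ 2 * (-2 * c + c ^ 2 + c ^ 2 * (X ^ (m + 1) * q)), ?_⟩
    have e : X ^ (m + 1) = Y * X := by rw [hY, pow_succ]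
    have e2 : X ^ (m + 1 + 1) = Y * X ^ 2 := by rw [hY, add_assoc, pow_add]
    rw [e] at h ⊢
    rw [e2]
    linear_combination (1 - c * (Y * X * q)) ^ 2 * h - Y * X * q * h2

/-- Jets with constant term at least `1/2` have an inverse square root, with control of the
seminorm independent of `x` and `δ`. -/
theorem exists_root (m n : ℕ) (hm : 0 < m) (B : ℝ) :
    ∃ K : ℝ, 0 < K ∧ ∀ (x : Fin n → ℝ) (δ : ℝ), 0 < δ → ∀ S : MvPolynomial (Fin n) ℝ,
      jn m x δ S ≤ B → 1 / 2 ≤ MvPolynomial.eval x S →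
      ∃ R, jq m x (R ^ 2 * S) = 1 ∧ jn m x δ R ≤ K := by
  obtain ⟨p, q, hpq⟩ := exists_invSqrt (m - 1)
  rw [Nat.sub_add_cancel hm] at hpq
  refine ⟨2 * (∑ j ∈ p.support, |p.coeff j| * (2 * |B| + 1) ^ j) + 1, by positivity, ?_⟩
  intro x δ hδ S hS hSx
  set c := MvPolynomial.eval x S with hc
  have hc0 : 0 < c := by linarith
  set T : MvPolynomial (Fin n) ℝ := MvPolynomial.C c⁻¹ * S - 1 with hT
  have hTn : jn m x δ T ≤ 2 * |B| + 1 := by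
    rw [hT, sub_eq_add_neg]
    refine (jn_add_le hδ _ _).trans (add_le_add ?_ ?_)
    · refine jn_mul_le' hm hδ ?_ (hS.trans (le_abs_self B))
      rw [jn_C hm, abs_of_pos (inv_pos.2 hc0), inv_le_comm₀ hc0 two_pos]
      linarith
    · rw [jn_neg, ← map_one MvPolynomial.C, jn_C hm, abs_one]
  -- `T` vanishes at `x`, so `T ^ m` vanishes there to order `m`.
  have hTm : jq m x (T ^ m) = 0 := by
    rw [Ideal.Quotient.eq_zero_iff_mem, jideal, Ideal.mem_comap, map_pow]
    refine Ideal.pow_mem_pow ?_ _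
    rw [← pow_one (MvPolynomial.idealOfVars (Fin n) ℝ), MvPolynomial.mem_pow_idealOfVars_iff']
    intro a ha
    have : a = 0 := by
      rw [← Finsupp.degree_eq_zero_iff]; omega
    subst this
    rw [← eval_eq_tay, hT]
    simp [← hc, hc0.ne']
  set R : MvPolynomial (Fin n) ℝ := MvPolynomial.C (Real.sqrt c)⁻¹ * Polynomial.aeval T p with hR
  refine ⟨R, ?_, ?_⟩
  · have h1 : (Polynomial.aeval T p) ^ 2 * (1 + T) = 1 + T ^ m * Polynomial.aeval T q := by
      simpa using congrArg (Polynomial.aeval T) hpq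
    have h2 : R ^ 2 * S = 1 + T ^ m * Polynomial.aeval T q := by
      rw [← h1, hR, hT, mul_pow, ← map_pow, inv_pow, Real.sq_sqrt hc0.le]
      ring
    rw [h2, map_add, map_mul, hTm, map_one]
    ring
  · have h3 : jn m x δ (Polynomial.aeval T p)
        ≤ ∑ j ∈ p.support, |p.coeff j| * (2 * |B| + 1) ^ j := by
      rw [Polynomial.aeval_def, Polynomial.eval₂_eq_sum, Polynomial.sum]
      refine (jn_sum_le hδ _ _).trans (Finset.sum_le_sum fun j _ => ?_)
      refine jn_mul_le' hm hδ ?_ (jn_pow_le hm hδ hTn j)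
      rw [MvPolynomial.algebraMap_eq, jn_C hm]
    have h4 : jn m x δ R ≤ 2 * (∑ j ∈ p.support, |p.coeff j| * (2 * |B| + 1) ^ j) := by
      refine jn_mul_le' hm hδ ?_ h3
      rw [jn_C hm, abs_of_nonneg (by positivity)]
      rw [inv_le_comm₀ (Real.sqrt_pos.2 hc0) two_pos]
      refine Real.le_sqrt_of_sq_le ?_
      linarith
    linarith

/-! ### Convex combinations -/

/-- The bound of size `δ ^ (-|β|)`, rewritten in the scaling of `pdEval_le` and `jn_le`. -/
theorem le_mul_zpow_iff {n : ℕ} {δ : ℝ} (hδ : 0 < δ) (a A : ℝ) (β : Fin n → ℕ) :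
    a ≤ A * δ ^ (-(∑ i, (β i : ℤ))) ↔ a * δ ^ (∑ i, β i) ≤ A := by
  rw [← Nat.cast_sum, zpow_neg, zpow_natCast, ← div_eq_mul_inv, le_div_iff₀ (by positivity)]

/-- The bound of size `δ ^ (m - d)`, rewritten in the scaling of `pdEval_le` and `jn_le`. -/
theorem le_mul_pow_sub_iff {δ : ℝ} (hδ : 0 < δ) (a B : ℝ) {m d : ℕ} (hd : d ≤ m) :
    a ≤ B * δ ^ (m - d) ↔ a * δ ^ d ≤ B * δ ^ m := by
  rw [← Nat.sub_add_cancel hd, pow_add, ← mul_assoc, Nat.add_sub_cancel]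
  exact (mul_le_mul_iff_left₀ (by positivity)).symm

theorem eval_of_jq_one {m n : ℕ} (hm : 0 < m) {x : Fin n → ℝ} {F : MvPolynomial (Fin n) ℝ}
    (h : jq m x F = 1) : MvPolynomial.eval x F = 1 := by
  rw [← map_one (jq m x)] at h
  have := jq_eq_iff.1 h 0 (by simpa using hm)
  rw [eval_eq_tay]
  rw [tcoef, tcoef] at this
  simpa using this

/-- If `|Q(x)| ≤ 1`, shrinking `δ` by a factor `L` absorbs the constant in the derivative
bounds of `Q`: only the derivatives of positive order carry a constant, and each of these
gains at least one factor `L`. -/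
theorem pdEval_shrink {m n : ℕ} (hm : 0 < m) {x : Fin n → ℝ} {δ A L : ℝ} (hδ : 0 < δ)
    (hL : 1 ≤ L) (hAL : m.factorial * A ≤ L) {Q : MvPolynomial (Fin n) ℝ}
    (hQ : jn m x δ Q ≤ A) (hx : |MvPolynomial.eval x Q| ≤ 1)
    (β : Fin n → ℕ) (hβ : ∑ i, β i ≤ m - 1) :
    |pdEval β Q x| ≤ (δ / L) ^ (-(∑ i, (β i : ℤ))) := by
  have hL0 : 0 < L := by linarith
  rw [← one_mul (_ ^ _), le_mul_zpow_iff (by positivity)]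
  by_cases h0 : ∑ i, β i = 0
  · have hb : β = ((0 : Fin n →₀ ℕ) : Fin n → ℕ) := by
      ext i
      simpa using (Finset.sum_eq_zero_iff.1 h0) i (Finset.mem_univ i)
    rw [h0, pow_zero, mul_one, hb, pdEval_eq]
    simpa [tcoef, eval_eq_tay] using hx
  · have h1 := pdEval_le hm hδ Q β hβ hQ
    rw [div_pow, ← mul_div_assoc, div_le_one (by positivity)]
    exact (h1.trans hAL).trans (le_self_pow₀ hL h0)

/-- The case of two polynomials, with arbitrary constants. -/
theorem two_case (m n : ℕ) (hm : 0 < m) (Cw A : ℝ) (hCw : 0 < Cw) (hA : 0 < A) :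
    ∃ C : ℝ, 0 < C ∧
      ∀ (E : Set (Fin n → ℝ)) (Γ : (Fin n → ℝ) → ℝ → Set (MvPolynomial (Fin n) ℝ)) (δmax : ℝ),
        ShapeField m n E Γ → WConvex m n E Γ Cw δmax →
        ∀ δ : ℝ, 0 < δ → δ ≤ δmax → ∀ x ∈ E, ∀ M : ℝ, 0 < M →
          ∀ P₁ P₂ Q₁ Q₂ : MvPolynomial (Fin n) ℝ,
            P₁ ∈ Γ x (A * M) → P₂ ∈ Γ x (A * M) →
            jn m x δ (P₁ - P₂) ≤ A * (M * δ ^ m) →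
            jn m x δ Q₁ ≤ A → jn m x δ Q₂ ≤ A →
            jq m x (Q₁ ^ 2 + Q₂ ^ 2) = 1 →
            jetAt m x (Q₁ ^ 2 * P₁ + Q₂ ^ 2 * P₂) ∈ Γ x (C * M) := by
  set f : ℝ := (m.factorial : ℝ) with hf
  have hf1 : 1 ≤ f := Nat.one_le_cast.2 (Nat.factorial_pos m)
  set L : ℝ := f * A + 1 with hL
  have hL1 : 1 ≤ L := by rw [hL]; have : 0 < f * A := by positivity
                         linarith
  have hL0 : 0 < L := by linarith
  refine ⟨Cw * (f * A * L ^ m), by positivity, ?_⟩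
  intro E Γ δmax hΓ hW δ hδ hδm x hx M hM P₁ P₂ Q₁ Q₂ hP₁ hP₂ hP hQ₁ hQ₂ hQ
  have hM' : A * M ≤ f * A * L ^ m * M := by
    have h1 : 1 ≤ f * L ^ m := one_le_mul_of_one_le_of_one_le hf1 (one_le_pow₀ hL1)
    have h2 : 0 < A * M := by positivity
    nlinarith
  have hmono := (hΓ x hx (f * A * L ^ m * M) (by positivity)).2.2 (A * M) (by positivity) hM'
  have hev := eval_of_jq_one hm hQ
  rw [map_add, map_pow, map_pow] at hev
  have hx1 : |MvPolynomial.eval x Q₁| ≤ 1 := by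
    rw [← sq_le_one_iff_abs_le_one]; nlinarith [sq_nonneg (MvPolynomial.eval x Q₂)]
  have hx2 : |MvPolynomial.eval x Q₂| ≤ 1 := by
    rw [← sq_le_one_iff_abs_le_one]; nlinarith [sq_nonneg (MvPolynomial.eval x Q₁)]
  have hδ' : δ / L ≤ δ := div_le_self hδ.le hL1
  -- Convexity at the scale `δ / L`, with `M` enlarged so as to absorb the powers of `L`.
  have key := hW (δ / L) (by positivity) (hδ'.trans hδm) x hx
    (f * A * L ^ m * M) (by positivity) P₁ P₂ Q₁ Q₂ (hmono hP₁) (hmono hP₂) ?_ ?_ ?_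
  · rw [odot_odot hm, odot_odot hm, ← jetAt_add hm, ← mul_assoc] at key
    exact key
  · intro β hβ
    rw [le_mul_pow_sub_iff (by positivity) _ _ (by omega)]
    have h1 := pdEval_le hm hδ _ β hβ hP
    have h2 : |pdEval β (P₁ - P₂) x| * (δ / L) ^ (∑ i, β i)
        ≤ |pdEval β (P₁ - P₂) x| * δ ^ (∑ i, β i) := by gcongr
    refine (h2.trans h1).trans (le_of_eq ?_)
    rw [div_pow]
    field_simp
    rw [hf]
  · intro β hβ
    exact ⟨pdEval_shrink hm hδ hL1 (by linarith) hQ₁ hx1 β hβ,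
      pdEval_shrink hm hδ hL1 (by linarith) hQ₂ hx2 β hβ⟩
  · rw [odot, odot, ← jetAt_add hm, ← sq, ← sq, jetAt_congr hm (hQ.trans (map_one _).symm)]
    exact jetAt_eq_self hm x 1 (by simp)

/-- The statement for `k + 1` polynomials in terms of the seminorm and the jet ring. In the inductive step the
index `j` split off satisfies `Q_j(x)² ≤ 1/2`, so that the remaining sum of squares `S` has an
inverse square root `R` in the jet ring. -/
theorem k_case (m n : ℕ) (hm : 0 < m) (Cw : ℝ) (hCw : 0 < Cw) (k : ℕ) :
    ∀ A : ℝ, 0 < A → ∃ C : ℝ, 0 < C ∧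
      ∀ (E : Set (Fin n → ℝ)) (Γ : (Fin n → ℝ) → ℝ → Set (MvPolynomial (Fin n) ℝ)) (δmax : ℝ),
        ShapeField m n E Γ → WConvex m n E Γ Cw δmax →
        ∀ δ : ℝ, 0 < δ → δ ≤ δmax → ∀ x ∈ E, ∀ M : ℝ, 0 < M →
          ∀ P Q : Fin (k + 1) → MvPolynomial (Fin n) ℝ,
            (∀ i, P i ∈ Γ x (A * M)) →
            (∀ i j, jn m x δ (P i - P j) ≤ A * (M * δ ^ m)) →
            (∀ i, jn m x δ (Q i) ≤ A) →
            jq m x (∑ i, Q i ^ 2) = 1 →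
            jetAt m x (∑ i, Q i ^ 2 * P i) ∈ Γ x (C * M) := by
  induction k with
  | zero =>
    intro A hA
    refine ⟨A, hA, ?_⟩
    intro E Γ δmax hΓ hW δ hδ hδm x hx M hM P Q hP _ _ hQ
    rw [Fin.sum_univ_one] at hQ ⊢
    have h1 : jetAt m x (Q 0 ^ 2 * P 0) = P 0 := by
      rw [← jetAt_eq_self hm x (P 0) ((hΓ x hx (A * M) (by positivity)).2.1 _ (hP 0))]
      refine (jetAt_congr hm ?_)
      rw [map_mul, hQ, one_mul, jq_jetAt hm]
    rw [h1]
    exact hP 0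
  | succ k ih =>
    intro A hA
    obtain ⟨K, hK, hroot⟩ := exists_root m n hm ((k + 1 : ℕ) * A ^ 2)
    obtain ⟨C₁, hC₁, h₁⟩ := ih (A + A * K) (by positivity)
    set D : ℝ := (k + 1 : ℕ) * ((A * K) ^ 2 * A) with hD
    -- `A₂` dominates the constants of `P_j` and `Q_j`, of membership of `V`, of `V - P_j`,
    -- and of `S R`.
    set A₂ : ℝ := A + C₁ + D + (k + 1 : ℕ) * A ^ 2 * K with hA₂
    have hD0 : 0 < D := by positivity
    have hE0 : 0 < (k + 1 : ℕ) * A ^ 2 * K := by positivity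
    obtain ⟨C₂, hC₂, h₂⟩ := two_case m n hm Cw A₂ hCw (by positivity)
    refine ⟨C₂, hC₂, ?_⟩
    intro E Γ δmax hΓ hW δ hδ hδm x hx M hM P Q hP hPP hQ hQ1
    have hmono : ∀ a b : ℝ, 0 < a → a ≤ b → Γ x (a * M) ⊆ Γ x (b * M) := fun a b ha hab =>
      (hΓ x hx (b * M) (mul_pos (ha.trans_le hab) hM)).2.2 (a * M) (by positivity) (by gcongr)
    have hδM : 0 < M * δ ^ m := by positivity
    have hev := eval_of_jq_one hm hQ1
    obtain ⟨j, hj⟩ : ∃ j, MvPolynomial.eval x (Q j) ^ 2 ≤ 1 / 2 := by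
      by_contra! hcon
      rw [Fin.sum_univ_succ, Fin.sum_univ_succ] at hev
      simp only [map_add, map_pow, map_sum] at hev
      have h3 : 0 ≤ ∑ i : Fin k, MvPolynomial.eval x (Q i.succ.succ) ^ 2 :=
        Finset.sum_nonneg fun _ _ => sq_nonneg _
      linarith [hcon 0, hcon (Fin.succ 0)]
    rw [Fin.sum_univ_succAbove _ j] at hQ1 hev ⊢
    set S : MvPolynomial (Fin n) ℝ := ∑ i, Q (j.succAbove i) ^ 2 with hS
    have hSn : jn m x δ S ≤ (k + 1 : ℕ) * A ^ 2 := by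
      refine (jn_sum_le hδ _ _).trans ?_
      refine (Finset.sum_le_card_nsmul _ _ (A ^ 2) fun i _ => jn_pow_le hm hδ (hQ _) 2).trans ?_
      simp
    obtain ⟨R, hRS, hR⟩ := hroot x δ hδ S hSn (by
      rw [map_add, map_pow] at hev; linarith)
    have hQR : ∀ i, jn m x δ (Q i * R) ≤ A * K := fun i => jn_mul_le' hm hδ (hQ i) hR
    have hsum : jq m x (∑ i, (Q (j.succAbove i) * R) ^ 2) = 1 := by
      have h3 : ∑ i, (Q (j.succAbove i) * R) ^ 2 = R ^ 2 * S := by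
        rw [hS, Finset.mul_sum]
        exact Finset.sum_congr rfl fun i _ => by ring
      rw [h3, hRS]
    -- `V` is the combination of the `P i`, `i ≠ j`, with the normalized weights `Q i * R`.
    set V := ∑ i, (Q (j.succAbove i) * R) ^ 2 * P (j.succAbove i) with hV
    have hVΓ : jetAt m x V ∈ Γ x (C₁ * M) :=
      h₁ E Γ δmax hΓ hW δ hδ hδm x hx M hM (fun i => P (j.succAbove i))
        (fun i => Q (j.succAbove i) * R)
        (fun i => hmono A _ hA (by have : 0 < A * K := by positivity
                                   linarith) (hP _))
        (fun i i' => (hPP _ _).trans (by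
          have : 0 < A * K := by positivity
          gcongr
          linarith))
        (fun i => (hQR _).trans (by linarith))
        hsum
    have hdiff : jn m x δ (jetAt m x V - P j) ≤ D * (M * δ ^ m) := by
      have h3 : jq m x (jetAt m x V - P j)
          = jq m x (∑ i, (Q (j.succAbove i) * R) ^ 2 * (P (j.succAbove i) - P j)) := by
        simp only [mul_sub, Finset.sum_sub_distrib]
        rw [← Finset.sum_mul, map_sub, map_sub, map_mul, hsum, jq_jetAt hm, one_mul]
      rw [jn_congr hm h3]
      refine (jn_sum_le hδ _ _).trans ?_
      refine (Finset.sum_le_card_nsmul _ _ ((A * K) ^ 2 * (A * (M * δ ^ m))) fun i _ =>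
        jn_mul_le' hm hδ (jn_pow_le hm hδ (hQR _) 2) (hPP _ _)).trans (le_of_eq ?_)
      rw [Finset.card_univ, Fintype.card_fin, nsmul_eq_mul, hD]
      ring
    -- `S * R` is a square root of `S` in the jet ring.
    have hroot2 : jq m x ((S * R) ^ 2) = jq m x S := by
      rw [show (S * R) ^ 2 = S * (R ^ 2 * S) by ring, map_mul, hRS, mul_one]
    have key := h₂ E Γ δmax hΓ hW δ hδ hδm x hx M hM (P j) (jetAt m x V) (Q j) (S * R)
      (hmono A _ hA (by linarith) (hP j)) (hmono C₁ _ hC₁ (by linarith) hVΓ)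
      (by
        rw [← neg_sub, jn_neg]
        refine hdiff.trans ?_
        gcongr
        linarith)
      ((hQ j).trans (by linarith))
      ((jn_mul_le' hm hδ hSn hR).trans (by linarith))
      (by rw [map_add, hroot2, ← map_add, hQ1])
    convert key using 1
    apply jetAt_congr hm
    have h4 : V = R ^ 2 * ∑ i, Q (j.succAbove i) ^ 2 * P (j.succAbove i) := by
      rw [hV, Finset.mul_sum]
      exact Finset.sum_congr rfl fun i _ => by ring
    have h5 : jq m x ((S * R) ^ 2 * jetAt m x V)
        = jq m x (∑ i, Q (j.succAbove i) ^ 2 * P (j.succAbove i)) := by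
      rw [map_mul, hroot2, jq_jetAt hm, ← map_mul, h4, ← mul_assoc, mul_comm S, map_mul, hRS,
        one_mul]
    rw [map_add, map_add, h5]

/-- Lemma 2.2: the `k`-fold version of scaled `(C_w, δ_max)`-convexity, with
constant `C` determined by `A'`, `A''`, `C_w`, `m`, `n`, `k`. -/
theorem shape_field_scaled_convexity_k (m n k : ℕ) (hm : 0 < m) (hn : 0 < n) (hk : 1 ≤ k)
    (Cw A' A'' : ℝ) (hCw : 0 < Cw) (hA' : 0 < A') (hA'' : 0 < A'') :
    ∃ C : ℝ, 0 < C ∧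
      ∀ (E : Set (Fin n → ℝ)), E.Finite →
      ∀ (Γ : (Fin n → ℝ) → ℝ → Set (MvPolynomial (Fin n) ℝ)) (δmax : ℝ), 0 < δmax →
        ShapeField m n E Γ → WConvex m n E Γ Cw δmax →
        ∀ δ : ℝ, 0 < δ → δ ≤ δmax → ∀ x ∈ E, ∀ M : ℝ, 0 < M →
          ∀ P Q : Fin k → MvPolynomial (Fin n) ℝ,
            (∀ i, P i ∈ Γ x (A' * M)) →
            (∀ i j, ∀ β : Fin n → ℕ, (∑ l, β l) ≤ m - 1 →
              |pdEval β (P i - P j) x| ≤ A' * M * δ ^ (m - ∑ l, β l)) →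
            (∀ i, ∀ β : Fin n → ℕ, (∑ l, β l) ≤ m - 1 →
              |pdEval β (Q i) x| ≤ A'' * δ ^ (-(∑ l, (β l : ℤ)))) →
            (∑ i, odot m x (Q i) (Q i)) = 1 →
            (∑ i, odot m x (odot m x (Q i) (Q i)) (P i)) ∈ Γ x (C * M) := by
  obtain ⟨k, rfl⟩ : ∃ l, k = l + 1 := ⟨k - 1, by omega⟩
  set N : ℝ := ((idx m n).card : ℝ) with hN
  have hN0 : 0 ≤ N := by positivity
  have hNA' : 0 ≤ N * A' := by positivity
  have hNA'' : 0 ≤ N * A'' := by positivity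
  obtain ⟨C, hC, h⟩ := k_case m n hm Cw hCw k (A' + N * A' + N * A'') (by positivity)
  refine ⟨C, hC, ?_⟩
  intro E _ Γ δmax _ hΓ hW δ hδ hδm x hx M hM P Q hP hPP hQ hQ1
  have key := h E Γ δmax hΓ hW δ hδ hδm x hx M hM P Q ?_ ?_ ?_ ?_
  · rw [jetAt_sum hm] at key
    simpa only [odot_odot hm] using key
  · intro i
    exact (hΓ x hx _ (by positivity)).2.2 (A' * M) (by positivity) (by gcongr; linarith) (hP i)
  · intro i j
    refine (jn_le hm hδ _ (A := A' * M * δ ^ m) fun β hβ => ?_).trans ?_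
    · rw [← le_mul_pow_sub_iff hδ _ _ (by omega)]
      exact hPP i j β hβ
    · rw [← hN, show N * (A' * M * δ ^ m) = N * A' * (M * δ ^ m) by ring]
      gcongr
      linarith
  · intro i
    refine (jn_le hm hδ _ (A := A'') fun β hβ => ?_).trans ?_
    · rw [← le_mul_zpow_iff hδ]
      exact hQ i β hβ
    · linarith
  · rw [← map_one (jq m x), ← hQ1, map_sum, map_sum]
    exact Finset.sum_congr rfl fun i _ => by rw [odot, jq_jetAt hm, sq]

end
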